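/- Let T ∈ B_{(1^r)}(n,m) be a single-column lexicographic bitableau, i.e., a lexicographically strictly increasing sequence of pairs (a_1,b_1) < ⋯ < (a_r,b_r) read top to bottom. Form the Burge word of T by listing the boxes grouped by first coordinate k = 1,2,…,n in increasing order, within each group from the bottom of the column to the top (so second coordinates are strictly decreasing within each group), and let bRSK(T) = (P, Q^t), where P is obtained by row-inserting the second coordinates in this order, Q is the (row-strict) recording tableau of the first coordinates, and Q^t is the transpose of Q. Then bRSK(T) = (P(w(T)), P(u'(T))), where P(·) denotes the row-insertion tableau of a word. -/

import Mathlib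

/-- Lexicographic (weak) order on pairs: `(a,b) ≤ (a',b')` iff `a < a'`, or `a = a'` and `b ≤ b'`. -/
def lexLe (p q : ℕ × ℕ) : Prop := p.1 < q.1 ∨ (p.1 = q.1 ∧ p.2 ≤ q.2)

/-- Lexicographic strict order on pairs. -/
def lexLt (p q : ℕ × ℕ) : Prop := p.1 < q.1 ∨ (p.1 = q.1 ∧ p.2 < q.2)

instance : DecidableRel lexLe := fun p q =>
  inferInstanceAs (Decidable (p.1 < q.1 ∨ (p.1 = q.1 ∧ p.2 ≤ q.2)))

instance : DecidableRel lexLt := fun p q =>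
  inferInstanceAs (Decidable (p.1 < q.1 ∨ (p.1 = q.1 ∧ p.2 < q.2)))

/-- Row-insert the value `v` into the tableau `P` (a list of rows): `v` is appended at the end
of the first row if it is at least as large as every entry there; otherwise it replaces the
leftmost entry strictly larger than `v`, which is then inserted into the next row. -/
def insRow (v : ℕ) : List (List ℕ) → List (List ℕ)
  | [] => [[v]]
  | r :: rest =>
    match r.findIdx? (fun x => decide (v < x)) with
    | none => (r ++ [v]) :: rest
    | some idx => (r.set idx v) :: insRow (r.getD idx 0) rest

/-- The insertion tableau `P(w)` of a word: successively row-insert the letters of `w`,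
starting from the empty tableau. -/
def Pword (w : List ℕ) : List (List ℕ) :=
  w.foldl (fun t v => insRow v t) []

/-- The index of the row in which `p'` (the result of a row insertion into `p`) has one more
box than `p`. -/
def growIdx (p p' : List (List ℕ)) : ℕ :=
  (List.range p'.length).findIdx fun r => decide ((p.getD r []).length ≠ (p'.getD r []).length)

/-- Append the value `a` at the end of row `r` of the tableau `q`. -/
def addBox (q : List (List ℕ)) (r a : ℕ) : List (List ℕ) :=
  if r < q.length then q.set r (q.getD r [] ++ [a]) else q ++ [[a]]

/-- The RSK correspondence applied to a biword, given as a list of (top, bottom) pairs: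
the bottom entries are row-inserted in order to form the insertion tableau `P`, and the top
entries are recorded in the newly created boxes to form the recording tableau `Q`. -/
def rsk (w : List (ℕ × ℕ)) : List (List ℕ) × List (List ℕ) :=
  w.foldl (fun PQ ab =>
    let P' := insRow ab.2 PQ.1
    (P', addBox PQ.2 (growIdx PQ.1 P') ab.1)) ([], [])

/-- A word is Yamanouchi if for every `i ≥ 1`, every suffix contains at least as many letters
`i` as letters `i+1`. -/
def Yamanouchi (w : List ℕ) : Prop :=
  ∀ i : ℕ, 1 ≤ i → ∀ s ∈ w.tails, s.count (i + 1) ≤ s.count i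

/-- A one-row lexicographic bitableau in `B_{(r)}(n,m)`, encoded as its list of entries read
left to right: pairs in `{1,…,n} × {1,…,m}`, weakly increasing in lexicographic order. -/
def IsRowBitab (n m r : ℕ) (L : List (ℕ × ℕ)) : Prop :=
  L.length = r ∧ (∀ p ∈ L, (1 ≤ p.1 ∧ p.1 ≤ n) ∧ (1 ≤ p.2 ∧ p.2 ≤ m)) ∧ L.Chain' lexLe

/-- The sort-by-top reading word `w(T)` of a one-row bitableau: for `k = 1, …, n` in increasing
order, the second coordinates of the boxes with first coordinate `k`, read left to right. -/
def wRow (n : ℕ) (L : List (ℕ × ℕ)) : List ℕ :=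
  (List.range n).flatMap fun k => (L.filter fun p => decide (p.1 = k + 1)).map Prod.snd

/-- The reading word `u(T)` of a one-row bitableau: for `k = 1, …, m` in increasing order,
the first coordinates of the boxes with second coordinate `k`, read left to right. -/
def uRow (m : ℕ) (L : List (ℕ × ℕ)) : List ℕ :=
  (List.range m).flatMap fun k => (L.filter fun p => decide (p.2 = k + 1)).map Prod.fst

/-- A single-column lexicographic bitableau in `B_{(1^r)}(n,m)`, encoded as its list of entries
read top to bottom: pairs in `{1,…,n} × {1,…,m}`, strictly increasing in lexicographic order. -/
def IsColBitab (n m r : ℕ) (L : List (ℕ × ℕ)) : Prop :=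
  L.length = r ∧ (∀ p ∈ L, (1 ≤ p.1 ∧ p.1 ≤ n) ∧ (1 ≤ p.2 ∧ p.2 ≤ m)) ∧ L.Chain' lexLt

/-- The sort-by-top reading word `w(T)` of a single-column bitableau: for `k = 1, …, n` in
increasing order, the second coordinates of the boxes with first coordinate `k`, each group
read from the bottom of the column to the top. -/
def wCol (n : ℕ) (L : List (ℕ × ℕ)) : List ℕ :=
  (List.range n).flatMap fun k => ((L.filter fun p => decide (p.1 = k + 1)).reverse).map Prod.snd

/-- The reading word `u'(T)` of a single-column bitableau: for `k = m, m−1, …, 1` in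
decreasing order, the first coordinates of the boxes with second coordinate `k`, each group
read from the bottom of the column to the top. -/
def uCol' (m : ℕ) (L : List (ℕ × ℕ)) : List ℕ :=
  ((List.range m).reverse).flatMap fun k =>
    ((L.filter fun p => decide (p.2 = k + 1)).reverse).map Prod.fst

/-- The Burge word of a single-column bitableau: list the boxes grouped by first coordinate
`k = 1, …, n` in increasing order, within each group from the bottom of the column to the
top (so second coordinates strictly decrease within each group). -/
def burge (n : ℕ) (L : List (ℕ × ℕ)) : List (ℕ × ℕ) :=
  (List.range n).flatMap fun k => (L.filter fun p => decide (p.1 = k + 1)).reverse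

/-- The transpose of a tableau given as a list of rows: column `c` becomes row `c`. -/
def transposeT (q : List (List ℕ)) : List (List ℕ) :=
  (List.range (q.getD 0 []).length).map fun c => q.filterMap fun row => row[c]?

/-- The Burge insertion correspondence `bRSK` on a single-column bitableau: row-insert the
second coordinates of the Burge word in order to form `P`, record the first coordinates to
form the (row-strict) recording tableau `Q`, and output `(P, Qᵗ)`. -/
def bRSK (n : ℕ) (L : List (ℕ × ℕ)) : List (List ℕ) × List (List ℕ) :=
  ((rsk (burge n L)).1, transposeT (rsk (burge n L)).2)

/-!
Row insertion is peeled off one row at a time. For a Burge word, the first row of the recording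
tableau is obtained by *dual* insertion (`x` bumps the leftmost entry `≥ x`) of the tops sorted by
their bottoms: a letter with maximal bottom stays at the end of its row until a later letter bumps
it, and this affects the recorded tops exactly as a dual insertion of its own top. The bumped
letters form a Burge word again, so the recording tableau is the dual insertion tableau of the tops
sorted by bottoms, a word which is the reverse of `u'(T)`.

The rows of a dual insertion tableau are the columns of a semistandard tableau. If dual insertion
of `x` turns the column `C` into `C'` and bumps `c`, then, reading columns from bottom to top, the
words `x C` and `C' c` are Knuth equivalent. Hence the column reading word of this semistandard
tableau is Knuth equivalent to the reverse of the inserted word, and row insertion of either word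
yields the tableau.
-/

/-! ### Insertion into a row and into a tableau -/

section Insertion

variable {α : Type*} (r : α → α → Prop) [DecidableRel r]

/-- Insertion of `v` into a row: `v` replaces the leftmost entry `x` with `r v x`, or is appended
if there is none; the second component is the replaced (bumped) entry. Schensted's row insertion
is the case `r = (· < ·)`, dual row insertion the case `r = (· ≤ ·)`. -/
def rowInsert (v : α) : List α → List α × Option α
  | [] => ([v], none)
  | x :: S =>
    if r v x then (v :: S, some x) else (x :: (rowInsert v S).1, (rowInsert v S).2)

/-- Successive insertion of the letters of a word into the row `S`: the resulting row and the
word of bumped letters. -/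
def rowInsertWord (S : List α) : List α → List α × List α
  | [] => (S, [])
  | v :: w =>
    ((rowInsertWord (rowInsert r v S).1 w).1,
      (rowInsert r v S).2.toList ++ (rowInsertWord (rowInsert r v S).1 w).2)

/-- Insertion of `v` into a tableau: entries bumped from a row are inserted into the next one. -/
def tableauInsert (v : α) : List (List α) → List (List α)
  | [] => [[v]]
  | S :: T =>
    (rowInsert r v S).1 :: (rowInsert r v S).2.elim T fun c => tableauInsert c T

/-- The insertion tableau of a word, for the insertion rule given by `r`. -/
def insertionTableau (w : List α) : List (List α) :=
  w.foldl (fun T v => tableauInsert r v T) []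

theorem mem_rowInsert_self (v : α) (S : List α) :
    v ∈ (rowInsert r v S).1 := by
  induction S with
  | nil => simp [rowInsert]
  | cons x S ih => grind [rowInsert]

variable {r} {v c x s : α} {S T : List α}

theorem rel_of_rowInsert_eq_some (h : (rowInsert r v S).2 = some c) : r v c := by
  induction S with
  | nil => simp [rowInsert] at h
  | cons x S ih => grind [rowInsert]

theorem mem_of_rowInsert_eq_some (h : (rowInsert r v S).2 = some c) : c ∈ S := by
  induction S with
  | nil => simp [rowInsert] at h
  | cons x S ih => grind [rowInsert]

theorem eq_or_mem_of_mem_rowInsert (h : x ∈ (rowInsert r v S).1) : x = v ∨ x ∈ S := by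
  induction S with
  | nil => simpa [rowInsert] using h
  | cons y S ih => grind [rowInsert]

theorem rowInsert_append_of_eq_none (T : List α) (h : (rowInsert r v S).2 = none) :
    rowInsert r v (S ++ T) = (S ++ (rowInsert r v T).1, (rowInsert r v T).2) := by
  induction S with
  | nil => rfl
  | cons x S ih => grind [rowInsert]

theorem rowInsert_eq_of_eq_none (h : (rowInsert r v S).2 = none) :
    rowInsert r v S = (S ++ [v], none) := by
  simpa [rowInsert] using rowInsert_append_of_eq_none [] h

theorem rowInsert_append_of_eq_some (T : List α) (h : (rowInsert r v S).2 = some c) :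
    rowInsert r v (S ++ T) = ((rowInsert r v S).1 ++ T, some c) := by
  induction S with
  | nil => simp [rowInsert] at h
  | cons x S ih => grind [rowInsert]

theorem rowInsert_snd_eq_none_iff : (rowInsert r v S).2 = none ↔ ∀ x ∈ S, ¬ r v x := by
  induction S with
  | nil => simp [rowInsert]
  | cons x S ih => grind [rowInsert]

theorem rowInsert_of_forall_not (h : ∀ x ∈ S, ¬ r v x) : rowInsert r v S = (S ++ [v], none) :=
  rowInsert_eq_of_eq_none (rowInsert_snd_eq_none_iff.2 h)

theorem rowInsert_append_of_forall_not (T : List α) (h : ∀ x ∈ S, ¬ r v x) :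
    rowInsert r v (S ++ T) = (S ++ (rowInsert r v T).1, (rowInsert r v T).2) :=
  rowInsert_append_of_eq_none T (rowInsert_snd_eq_none_iff.2 h)

theorem length_rowInsert_of_eq_some (h : (rowInsert r v S).2 = some c) :
    (rowInsert r v S).1.length = S.length := by
  induction S with
  | nil => simp [rowInsert] at h
  | cons x S ih => grind [rowInsert]

theorem pairwise_rowInsert [IsTrans α r] (hS : S.Pairwise fun a b => ¬ r b a) :
    (rowInsert r v S).1.Pairwise fun a b => ¬ r b a := by
  induction S with
  | nil => simp [rowInsert]
  | cons x S ih =>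
    obtain ⟨hx, hS⟩ := List.pairwise_cons.1 hS
    by_cases hvx : r v x
    · simpa only [rowInsert, hvx, if_true, List.pairwise_cons] using
        ⟨fun y hy hyv => hx y hy (_root_.trans hyv hvx), hS⟩
    · simp only [rowInsert, hvx, if_false, List.pairwise_cons]
      refine ⟨fun y hy => ?_, ih hS⟩
      obtain rfl | hy := eq_or_mem_of_mem_rowInsert hy
      exacts [hvx, hx y hy]

theorem rowInsertWord_append (S u w : List α) :
    rowInsertWord r S (u ++ w) =
      ((rowInsertWord r (rowInsertWord r S u).1 w).1,
        (rowInsertWord r S u).2 ++ (rowInsertWord r (rowInsertWord r S u).1 w).2) := by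
  induction u generalizing S with
  | nil => simp [rowInsertWord]
  | cons v u ih => simp [rowInsertWord, ih]

theorem rowInsertWord_cons_of_forall_not {w : List α} (h : ∀ v ∈ w, ¬ r v s) :
    rowInsertWord r (s :: S) w = (s :: (rowInsertWord r S w).1, (rowInsertWord r S w).2) := by
  induction w generalizing S with
  | nil => rfl
  | cons v w ih => grind [rowInsertWord, rowInsert]

theorem length_rowInsertWord_snd_le (S w : List α) :
    (rowInsertWord r S w).2.length ≤ w.length := by
  induction w generalizing S with
  | nil => simp [rowInsertWord]
  | cons v w ih => grind [rowInsertWord, Option.length_toList_le]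

theorem length_rowInsertWord_nil_snd_lt {w : List α} (hw : w ≠ []) :
    (rowInsertWord r [] w).2.length < w.length := by
  obtain ⟨v, w, rfl⟩ := List.exists_cons_of_ne_nil hw
  simpa [rowInsertWord, rowInsert, Nat.lt_succ_iff] using length_rowInsertWord_snd_le [v] w

theorem insertionTableau_append_singleton (w : List α) (v : α) :
    insertionTableau r (w ++ [v]) = tableauInsert r v (insertionTableau r w) := by
  simp [insertionTableau]

theorem insertionTableau_eq_cons {w : List α} (hw : w ≠ []) :
    insertionTableau r w =
      (rowInsertWord r [] w).1 :: insertionTableau r (rowInsertWord r [] w).2 := by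
  induction w using List.reverseRecOn with
  | nil => exact absurd rfl hw
  | append_singleton w v ih =>
    rw [insertionTableau_append_singleton, rowInsertWord_append]
    obtain rfl | hw' := eq_or_ne w []
    · rfl
    · rw [ih hw', tableauInsert]
      cases h : (rowInsert r v (rowInsertWord r [] w).1).2 <;>
        simp [rowInsertWord, h, insertionTableau_append_singleton]

end Insertion

/-! ### Knuth equivalence -/

section Knuth

variable {α : Type*} [LinearOrder α]

/-- Knuth (plactic) equivalence of words: the congruence for concatenation generated by the two
Knuth relations. -/
inductive KnuthEquiv : List α → List α → Prop
  | refl (w : List α) : KnuthEquiv w w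
  | symm {u w} : KnuthEquiv u w → KnuthEquiv w u
  | trans {u v w} : KnuthEquiv u v → KnuthEquiv v w → KnuthEquiv u w
  | append {u u' w w'} : KnuthEquiv u u' → KnuthEquiv w w' → KnuthEquiv (u ++ w) (u' ++ w')
  | yzx {x y z} : x < y → y ≤ z → KnuthEquiv [y, z, x] [y, x, z]
  | xzy {x y z} : x ≤ y → y < z → KnuthEquiv [x, z, y] [z, x, y]

variable {x y z : α} {S u w : List α}

theorem KnuthEquiv.append_left (p : List α) (h : KnuthEquiv u w) :
    KnuthEquiv (p ++ u) (p ++ w) :=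
  (KnuthEquiv.refl p).append h

theorem KnuthEquiv.append_right (h : KnuthEquiv u w) (s : List α) :
    KnuthEquiv (u ++ s) (w ++ s) :=
  h.append (.refl s)

theorem KnuthEquiv.length_eq (h : KnuthEquiv u w) : u.length = w.length := by
  induction h with
  | refl => rfl
  | symm _ ih => exact ih.symm
  | trans _ _ ih₁ ih₂ => exact ih₁.trans ih₂
  | append _ _ ih₁ ih₂ => rw [List.length_append, List.length_append, ih₁, ih₂]
  | yzx => rfl
  | xzy => rfl

theorem pairwise_le_rowInsert {v : α} (hS : S.Pairwise (· ≤ ·)) :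
    (rowInsert (· < ·) v S).1.Pairwise (· ≤ ·) := by
  simpa only [not_lt] using
    pairwise_rowInsert (r := (· < ·)) (v := v) (by simpa only [not_lt] using hS)

theorem pairwise_le_rowInsertWord (hS : S.Pairwise (· ≤ ·)) (w : List α) :
    (rowInsertWord (· < ·) S w).1.Pairwise (· ≤ ·) := by
  induction w generalizing S with
  | nil => exact hS
  | cons _ _ ih => exact ih (pairwise_le_rowInsert hS)

theorem exists_le_rowInsert_eq_some (hS : S.Pairwise (· ≤ ·)) (hx : x ∈ S) (hyx : y < x) :
    ∃ c ≤ x, (rowInsert (· < ·) y S).2 = some c := by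
  induction S with
  | nil => simp at hx
  | cons s S ih =>
    obtain ⟨hs, hS⟩ := List.pairwise_cons.1 hS
    by_cases hys : y < s
    · have hsx : s ≤ x := (List.mem_cons.1 hx).elim (fun h => h.ge) (hs x)
      exact ⟨s, hsx, by simp [rowInsert, hys]⟩
    · have hxS : x ∈ S := (List.mem_cons.1 hx).resolve_left fun h => hys (h ▸ hyx)
      simpa [rowInsert, hys] using ih hS hxS

theorem rowInsert_rowInsert_eq_none_of_le (hyz : y ≤ z)
    (hy : (rowInsert (· < ·) y S).2 = none) :
    (rowInsert (· < ·) z (rowInsert (· < ·) y S).1).2 = none := by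
  rw [rowInsert_snd_eq_none_iff] at hy ⊢
  intro t ht
  obtain rfl | ht := eq_or_mem_of_mem_rowInsert ht
  exacts [hyz.not_gt, fun hzt => hy t ht (hyz.trans_lt hzt)]

theorem bumped_le_bumped_of_le {b c : α} (hS : S.Pairwise (· ≤ ·)) (hyz : y ≤ z)
    (hb : (rowInsert (· < ·) y S).2 = some b)
    (hc : (rowInsert (· < ·) z (rowInsert (· < ·) y S).1).2 = some c) : b ≤ c := by
  have hzc := rel_of_rowInsert_eq_some hc
  obtain rfl | hcS := eq_or_mem_of_mem_rowInsert (mem_of_rowInsert_eq_some hc)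
  · exact absurd hzc hyz.not_gt
  · obtain ⟨b', hb'c, hb'⟩ := exists_le_rowInsert_eq_some hS hcS (hyz.trans_lt hzc)
    rwa [Option.some_injective _ (hb.symm.trans hb')]

theorem rowInsertWord_yzx (hxy : x < y) (hyz : y ≤ z) (hS : S.Pairwise (· ≤ ·)) :
    (rowInsertWord (· < ·) S [y, z, x]).1 = (rowInsertWord (· < ·) S [y, x, z]).1 ∧
      KnuthEquiv (rowInsertWord (· < ·) S [y, z, x]).2
        (rowInsertWord (· < ·) S [y, x, z]).2 := by
  have hzy : ¬ z < y := hyz.not_gt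
  have hzx : ¬ z < x := (hxy.le.trans hyz).not_gt
  induction S with
  | nil => simpa [rowInsertWord, rowInsert, *] using KnuthEquiv.refl _
  | cons s S ih =>
    obtain ⟨hs, hS⟩ := List.pairwise_cons.1 hS
    obtain hsx | hxs := le_or_gt s x
    · have hyzx : ∀ v ∈ [y, z, x], ¬ v < s := by grind
      rw [rowInsertWord_cons_of_forall_not hyzx,
        rowInsertWord_cons_of_forall_not (by grind)]
      exact ⟨by rw [(ih hS).1], (ih hS).2⟩
    obtain hsy | hys := le_or_gt s y
    · have hyS := rowInsert_rowInsert_eq_none_of_le (S := S) hyz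
      have hsz : ¬ z < s := (hsy.trans hyz).not_gt
      simp only [rowInsertWord, rowInsert, hxs, hsy.not_gt, hsz, hzx, if_true, if_false, true_and]
      cases hb : (rowInsert (· < ·) y S).2 with
      | none => simpa [hyS hb] using KnuthEquiv.refl _
      | some b =>
        cases hc : (rowInsert (· < ·) z (rowInsert (· < ·) y S).1).2 with
        | none => exact .refl _
        | some c =>
          exact .yzx (hsy.trans_lt (rel_of_rowInsert_eq_some hb))
            (bumped_le_bumped_of_le hS hyz hb hc)
    · simp only [rowInsertWord, rowInsert, hys, hxy, hzy, hzx, if_true, if_false, true_and]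
      cases hc : (rowInsert (· < ·) z S).2 with
      | none => exact .refl _
      | some c => exact .yzx hys (hs c (mem_of_rowInsert_eq_some hc))

theorem rowInsertWord_xzy (hxy : x ≤ y) (hyz : y < z) (hS : S.Pairwise (· ≤ ·)) :
    (rowInsertWord (· < ·) S [x, z, y]).1 = (rowInsertWord (· < ·) S [z, x, y]).1 ∧
      KnuthEquiv (rowInsertWord (· < ·) S [x, z, y]).2
        (rowInsertWord (· < ·) S [z, x, y]).2 := by
  have hxz : x < z := hxy.trans_lt hyz
  have hyx : ¬ y < x := hxy.not_gt
  have hzx : ¬ z < x := hxz.not_gt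
  induction S with
  | nil => simpa [rowInsertWord, rowInsert, *] using KnuthEquiv.refl _
  | cons s S ih =>
    obtain ⟨hs, hS⟩ := List.pairwise_cons.1 hS
    obtain hsx | hxs := le_or_gt s x
    · rw [rowInsertWord_cons_of_forall_not (by grind),
        rowInsertWord_cons_of_forall_not (by grind)]
      exact ⟨by rw [(ih hS).1], (ih hS).2⟩
    obtain hsz | hzs := le_or_gt s z
    · simp only [rowInsertWord, rowInsert, hxs, hsz.not_gt, hzx, hyx, if_true, if_false, true_and]
      obtain ⟨c, hcz, hc⟩ := exists_le_rowInsert_eq_some (pairwise_le_rowInsert hS)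
        (mem_rowInsert_self (· < ·) z S) hyz
      cases hb : (rowInsert (· < ·) z S).2 with
      | none => simpa [hc] using KnuthEquiv.refl _
      | some b =>
        have hsc : s ≤ c := by
          obtain rfl | hcS := eq_or_mem_of_mem_rowInsert (mem_of_rowInsert_eq_some hc)
          exacts [hsz, hs c hcS]
        simpa [hc] using KnuthEquiv.xzy hsc (hcz.trans_lt (rel_of_rowInsert_eq_some hb))
    · cases S with
      | nil => simpa [rowInsertWord, rowInsert, *] using KnuthEquiv.refl _
      | cons t S =>
        have hst : s ≤ t := hs t List.mem_cons_self
        have hzt : z < t := hzs.trans_le hst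
        have hyt : y < t := hyz.trans hzt
        simpa [rowInsertWord, rowInsert, *] using KnuthEquiv.yzx hzs hst

theorem rowInsertWord_congr (h : KnuthEquiv u w) (hS : S.Pairwise (· ≤ ·)) :
    (rowInsertWord (· < ·) S u).1 = (rowInsertWord (· < ·) S w).1 ∧
      KnuthEquiv (rowInsertWord (· < ·) S u).2 (rowInsertWord (· < ·) S w).2 := by
  induction h generalizing S with
  | refl => exact ⟨rfl, .refl _⟩
  | symm _ ih => exact ⟨(ih hS).1.symm, (ih hS).2.symm⟩
  | trans _ _ ih₁ ih₂ => exact ⟨(ih₁ hS).1.trans (ih₂ hS).1, (ih₁ hS).2.trans (ih₂ hS).2⟩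
  | @append u _ _ _ _ _ ih₁ ih₂ =>
    obtain ⟨hrow₁, hbumped₁⟩ := ih₁ hS
    obtain ⟨hrow₂, hbumped₂⟩ := ih₂ (pairwise_le_rowInsertWord hS u)
    rw [rowInsertWord_append, rowInsertWord_append, ← hrow₁]
    exact ⟨hrow₂, hbumped₁.append hbumped₂⟩
  | yzx hxy hyz => exact rowInsertWord_yzx hxy hyz hS
  | xzy hxy hyz => exact rowInsertWord_xzy hxy hyz hS

theorem KnuthEquiv.insertionTableau_eq {u w : List α} (h : KnuthEquiv u w) :
    insertionTableau (· < ·) u = insertionTableau (· < ·) w := by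
  obtain rfl | hu := eq_or_ne u []
  · rw [List.eq_nil_of_length_eq_zero h.length_eq.symm]
  have hw : w ≠ [] := List.ne_nil_of_length_pos (h.length_eq ▸ List.length_pos_iff.2 hu)
  obtain ⟨hrow, hbumped⟩ := rowInsertWord_congr h List.Pairwise.nil
  have := length_rowInsertWord_nil_snd_lt (r := (· < ·)) hu
  rw [insertionTableau_eq_cons hu, insertionTableau_eq_cons hw, hrow,
    hbumped.insertionTableau_eq]
termination_by u.length

end Knuth

/-! ### Dual insertion and column tableaux -/

section Columns

variable {α : Type*}

/-- The column reading word: columns from left to right, each read from bottom to top. -/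
def columnReading (D : List (List α)) : List α :=
  D.flatMap List.reverse

theorem columnReading_cons (C : List α) (D : List (List α)) :
    columnReading (C :: D) = C.reverse ++ columnReading D :=
  List.flatMap_cons

variable [LinearOrder α]

/-- `ColumnLE C E` says that the columns `C` and `E`, read top to bottom, may be adjacent in a
semistandard tableau: `E` is not longer than `C`, and rows weakly increase from `C` to `E`. -/
def ColumnLE : List α → List α → Prop
  | _, [] => True
  | [], _ :: _ => False
  | x :: C, y :: E => x ≤ y ∧ ColumnLE C E

/-- A semistandard tableau, encoded as the list of its columns. Equivalently, the columns are
the rows of a row-strict tableau. -/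
def IsColumnTableau : List (List α) → Prop
  | [] => True
  | C :: D => C.Pairwise (· < ·) ∧ ColumnLE C (D.headD []) ∧ IsColumnTableau D

variable {x c h : α} {C E S : List α} {D : List (List α)}

theorem columnLE_nil (C : List α) : ColumnLE C [] := by
  cases C <;> trivial

theorem ColumnLE.tail (hCE : ColumnLE C E) : ColumnLE C.tail E.tail := by
  cases C <;> cases E <;> first | exact columnLE_nil _ | exact hCE.elim | exact hCE.2

theorem ColumnLE.eq_nil (hE : ColumnLE [] E) : E = [] := by
  cases E with
  | nil => rfl
  | cons => exact hE.elim

theorem pairwise_lt_rowInsert (hC : C.Pairwise (· < ·)) :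
    (rowInsert (· ≤ ·) x C).1.Pairwise (· < ·) := by
  simpa only [not_le] using
    pairwise_rowInsert (r := (· ≤ ·)) (v := x) (by simpa only [not_le] using hC)

theorem ColumnLE.rowInsert_left (hCE : ColumnLE C E) (x : α) :
    ColumnLE (rowInsert (· ≤ ·) x C).1 E := by
  induction C generalizing E with
  | nil =>
    rw [hCE.eq_nil]
    exact columnLE_nil _
  | cons k C ih =>
    cases E with
    | nil => exact columnLE_nil _
    | cons e E =>
      obtain ⟨hke, hCE⟩ := hCE
      by_cases hxk : x ≤ k
      · simpa [rowInsert, hxk] using ⟨hxk.trans hke, hCE⟩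
      · simpa [rowInsert, hxk] using ⟨hke, ih hCE⟩

theorem ColumnLE.rowInsert_of_eq_some (hCE : ColumnLE C E) (hC : C.Pairwise (· < ·))
    (hc : (rowInsert (· ≤ ·) x C).2 = some c) :
    ColumnLE (rowInsert (· ≤ ·) x C).1 (rowInsert (· ≤ ·) c E).1 := by
  induction C generalizing E with
  | nil => simp [rowInsert] at hc
  | cons k C ih =>
    obtain ⟨hk, hC⟩ := List.pairwise_cons.1 hC
    by_cases hxk : x ≤ k
    · obtain rfl : k = c := by simpa [rowInsert, hxk] using hc
      cases E with
      | nil => simpa [rowInsert, hxk] using ⟨hxk, columnLE_nil _⟩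
      | cons e E => simpa [rowInsert, hxk, hCE.1] using ⟨hxk, hCE.2⟩
    · have hc : (rowInsert (· ≤ ·) x C).2 = some c := by simpa [rowInsert, hxk] using hc
      have hkc : k ≤ c := (hk c (mem_of_rowInsert_eq_some hc)).le
      cases E with
      | nil => simpa [rowInsert, hxk] using ⟨hkc, columnLE_nil _⟩
      | cons e E =>
        obtain ⟨hke, hCE⟩ := hCE
        by_cases hce : c ≤ e
        · simpa [rowInsert, hxk, hce] using ⟨hkc, hCE.rowInsert_left x⟩
        · simpa [rowInsert, hxk, hce] using ⟨hke, ih hCE hC hc⟩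

theorem headD_tableauInsert (x : α) (D : List (List α)) :
    (tableauInsert (· ≤ ·) x D).headD [] = (rowInsert (· ≤ ·) x (D.headD [])).1 := by
  cases D <;> rfl

theorem isColumnTableau_tableauInsert (hD : IsColumnTableau D) (x : α) :
    IsColumnTableau (tableauInsert (· ≤ ·) x D) := by
  induction D generalizing x with
  | nil => exact ⟨List.pairwise_singleton _ _, trivial, trivial⟩
  | cons C D ih =>
    obtain ⟨hC, hCD, hD⟩ := hD
    simp only [tableauInsert]
    cases hc : (rowInsert (· ≤ ·) x C).2 with
    | none => exact ⟨pairwise_lt_rowInsert hC, hCD.rowInsert_left x, hD⟩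
    | some c =>
      refine ⟨pairwise_lt_rowInsert hC, ?_, ih hD c⟩
      simpa only [Option.elim_some, headD_tableauInsert] using hCD.rowInsert_of_eq_some hC hc

theorem isColumnTableau_insertionTableau (y : List α) :
    IsColumnTableau (insertionTableau (· ≤ ·) y) := by
  induction y using List.reverseRecOn with
  | nil => trivial
  | append_singleton y x ih =>
    rw [insertionTableau_append_singleton]
    exact isColumnTableau_tableauInsert ih x

theorem IsColumnTableau.map_tail (hD : IsColumnTableau D) :
    IsColumnTableau (D.map List.tail) := by
  induction D with
  | nil => trivial
  | cons C D ih =>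
    obtain ⟨hC, hCD, hD⟩ := hD
    refine ⟨hC.sublist (List.tail_sublist C), ?_, ih hD⟩
    cases D with
    | nil => exact columnLE_nil _
    | cons E D => exact hCD.tail

theorem IsColumnTableau.columnReading_eq_nil (hD : IsColumnTableau D) (h : D.headD [] = []) :
    columnReading D = [] := by
  induction D with
  | nil => rfl
  | cons C D ih =>
    obtain rfl : C = [] := h
    exact ih hD.2.2 hD.2.1.eq_nil

theorem knuthEquiv_cons_append_singleton {w : List α} (hxh : x ≤ h) (hw : ∀ a ∈ w, h < a)
    (hdec : w.Pairwise (· > ·)) : KnuthEquiv (x :: (w ++ [h])) (w ++ [x, h]) := by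
  induction w with
  | nil => exact .refl _
  | cons a w ih =>
    obtain ⟨hha, hw⟩ := List.forall_mem_cons.1 hw
    obtain ⟨ha, hdec⟩ := List.pairwise_cons.1 hdec
    refine .trans ?_ ((ih hw hdec).append_left [a])
    cases w with
    | nil => exact .xzy hxh hha
    | cons b w =>
      have hxb : x ≤ b := hxh.trans (hw b List.mem_cons_self).le
      exact (KnuthEquiv.xzy hxb (ha b List.mem_cons_self)).append_right (w ++ [h])

theorem exists_rowInsert_eq_cons_le (x : α) (C : List α) :
    ∃ a E, (rowInsert (· ≤ ·) x C).1 = a :: E ∧ a ≤ x := by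
  cases C with
  | nil => exact ⟨x, [], rfl, le_rfl⟩
  | cons k C =>
    by_cases hxk : x ≤ k
    · exact ⟨x, C, by simp [rowInsert, hxk], le_rfl⟩
    · exact ⟨k, (rowInsert (· ≤ ·) x C).1, by simp [rowInsert, hxk], (not_le.1 hxk).le⟩

theorem knuthEquiv_cons_reverse_rowInsert (hC : C.Pairwise (· < ·))
    (hc : (rowInsert (· ≤ ·) x C).2 = some c) :
    KnuthEquiv (x :: C.reverse) ((rowInsert (· ≤ ·) x C).1.reverse ++ [c]) := by
  induction C with
  | nil => simp [rowInsert] at hc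
  | cons k C ih =>
    have hkC := pairwise_lt_rowInsert (x := x) hC
    obtain ⟨hk, hC⟩ := List.pairwise_cons.1 hC
    by_cases hxk : x ≤ k
    · obtain rfl : k = c := by simpa [rowInsert, hxk] using hc
      simpa [rowInsert, hxk] using knuthEquiv_cons_append_singleton (w := C.reverse) hxk
        (by simpa using hk) (List.pairwise_reverse.2 hC)
    · simp only [rowInsert, hxk, if_false] at hc hkC ⊢
      obtain ⟨a, E, hE, hax⟩ := exists_rowInsert_eq_cons_le x C
      have hka : k < a := List.rel_of_pairwise_cons hkC (hE ▸ List.mem_cons_self)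
      have hac : a ≤ c := hax.trans (rel_of_rowInsert_eq_some hc)
      rw [List.reverse_cons]
      refine .trans ((ih hC hc).append_right [k]) ?_
      simpa [hE] using (KnuthEquiv.yzx hka hac).append_left E.reverse

theorem IsColumnTableau.knuthEquiv_cons (hD : IsColumnTableau D) (x : α) :
    KnuthEquiv (x :: columnReading D)
      (columnReading (tableauInsert (· ≤ ·) x D)) := by
  induction D generalizing x with
  | nil => exact .refl _
  | cons C D ih =>
    obtain ⟨hC, -, hD⟩ := hD
    simp only [tableauInsert, columnReading_cons]
    cases hc : (rowInsert (· ≤ ·) x C).2 with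
    | none =>
      simpa [rowInsert_eq_of_eq_none hc] using KnuthEquiv.refl (x :: (C.reverse ++ columnReading D))
    | some c =>
      refine .trans ((knuthEquiv_cons_reverse_rowInsert hC hc).append_right _) ?_
      simpa [columnReading_cons] using (ih hD c).append_left (rowInsert (· ≤ ·) x C).1.reverse

theorem knuthEquiv_reverse_columnReading (y : List α) :
    KnuthEquiv y.reverse (columnReading (insertionTableau (· ≤ ·) y)) := by
  induction y using List.reverseRecOn with
  | nil => exact .refl _
  | append_singleton y x ih =>
    rw [insertionTableau_append_singleton, List.reverse_append]
    exact (ih.append_left [x]).trans ((isColumnTableau_insertionTableau y).knuthEquiv_cons x)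

theorem rowInsertWord_reverse_cons (hS : ∀ s ∈ S, s ≤ h) (hC : (h :: C).Pairwise (· < ·)) :
    rowInsertWord (· < ·) S (h :: C).reverse = (S ++ [h], C.reverse) := by
  induction C generalizing h with
  | nil =>
    simp [rowInsertWord, rowInsert_of_forall_not fun s hs => (hS s hs).not_gt]
  | cons k C ih =>
    obtain ⟨hh, hC⟩ := List.pairwise_cons.1 hC
    have hhk : h < k := hh k List.mem_cons_self
    rw [List.reverse_cons, rowInsertWord_append, ih (fun s hs => (hS s hs).trans hhk.le) hC]
    simp [rowInsertWord, rowInsert, hhk,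
      rowInsert_append_of_forall_not [k] fun s hs => (hS s hs).not_gt]

theorem IsColumnTableau.rowInsertWord_columnReading (hD : IsColumnTableau D)
    (hS : ∀ s ∈ S, ∀ h ∈ (D.headD []).head?, s ≤ h) :
    rowInsertWord (· < ·) S (columnReading D) =
      (S ++ D.filterMap List.head?, columnReading (D.map List.tail)) := by
  induction D generalizing S with
  | nil => simp [columnReading, rowInsertWord]
  | cons C D ih =>
    obtain ⟨hC, hCD, hD⟩ := hD
    cases C with
    | nil =>
      simpa [columnReading, List.filterMap_cons] using ih (S := S) hD (by rw [hCD.eq_nil]; simp)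
    | cons k C =>
      have hSk : ∀ s ∈ S, s ≤ k := fun s hs => hS s hs k rfl
      have hSD : ∀ s ∈ S ++ [k], ∀ h ∈ (D.headD []).head?, s ≤ h := by
        intro s hs h hh
        obtain ⟨E, hE⟩ := List.head?_eq_some_iff.1 hh
        rw [hE] at hCD
        obtain hs | hs := List.mem_append.1 hs
        · exact (hSk s hs).trans hCD.1
        · exact List.mem_singleton.1 hs ▸ hCD.1
      simp [columnReading_cons, rowInsertWord_append, -List.reverse_cons,
        rowInsertWord_reverse_cons hSk hC, ih hD hSD]

end Columns

theorem transposeT_cons_cons (k : ℕ) (C : List ℕ) (D : List (List ℕ)) :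
    transposeT ((k :: C) :: D) =
      ((k :: C) :: D).filterMap List.head? :: transposeT (((k :: C) :: D).map List.tail) := by
  have hhead : (List.head? : List ℕ → Option ℕ) = fun R => R[0]? :=
    funext fun R => List.head?_eq_getElem?
  have htail (c : ℕ) : (fun R : List ℕ => R[c]?) ∘ List.tail = fun R => R[c + 1]? := by
    funext R
    simp
  have hlen : ((((k :: C) :: D).map List.tail).getD 0 []).length = C.length := rfl
  simp only [transposeT, hlen, List.filterMap_map, htail, hhead]
  simp only [List.getD_cons_zero, List.length_cons, List.range_succ_eq_map, List.map_cons,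
    List.map_map, Function.comp_def]

theorem IsColumnTableau.insertionTableau_columnReading {D : List (List ℕ)}
    (hD : IsColumnTableau D) :
    insertionTableau (· < ·) (columnReading D) = transposeT D := by
  induction hN : (D.headD []).length generalizing D with
  | zero =>
    have hnil : D.headD [] = [] := List.eq_nil_of_length_eq_zero hN
    have hget : D.getD 0 [] = [] := by cases D with | nil => rfl | cons => exact hnil
    rw [hD.columnReading_eq_nil hnil, transposeT, hget]
    rfl
  | succ N ih =>
    obtain _ | ⟨_ | ⟨k, C⟩, D⟩ := D
    · simp at hN
    · simp at hN
    · rw [insertionTableau_eq_cons (by simp [columnReading]),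
        hD.rowInsertWord_columnReading (by simp), ih hD.map_tail (by simpa using hN),
        transposeT_cons_cons, List.nil_append]

/-! ### The Robinson–Schensted–Knuth correspondence row by row -/

section FirstRow

variable {α β : Type*} [LinearOrder α]

/-- The first rows of the two tableaux which RSK insertion assigns to a biword: the row `row` of
the insertion tableau, the row `recorded` of the recording tableau, and the biword `bumped` of
letters passed on to the second row, each carrying the top entry of the letter that bumped it. -/
structure FirstRow (β α : Type*) where
  row : List α
  recorded : List β
  bumped : List (β × α)

/-- Insertion of one more letter (top, bottom) of a biword into the first row. -/
def FirstRow.insert (s : FirstRow β α) (p : β × α) : FirstRow β α :=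
  match rowInsert (· < ·) p.2 s.row with
  | (S, none) => ⟨S, s.recorded ++ [p.1], s.bumped⟩
  | (S, some c) => ⟨S, s.recorded, s.bumped ++ [(p.1, c)]⟩

/-- The first rows obtained from a biword by RSK insertion. -/
def firstRow (w : List (β × α)) : FirstRow β α :=
  w.foldl FirstRow.insert ⟨[], [], []⟩

theorem FirstRow.insert_of_eq_none {s : FirstRow β α} {p : β × α}
    (h : (rowInsert (· < ·) p.2 s.row).2 = none) :
    s.insert p = ⟨s.row ++ [p.2], s.recorded ++ [p.1], s.bumped⟩ := by
  simp [insert, rowInsert_eq_of_eq_none h]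

theorem FirstRow.insert_of_eq_some {s : FirstRow β α} {p : β × α} {c : α}
    (h : (rowInsert (· < ·) p.2 s.row).2 = some c) :
    s.insert p = ⟨(rowInsert (· < ·) p.2 s.row).1, s.recorded, s.bumped ++ [(p.1, c)]⟩ := by
  rw [insert, ← Prod.mk.eta (p := rowInsert _ _ _), h]

theorem FirstRow.row_insert (s : FirstRow β α) (p : β × α) :
    (s.insert p).row = (rowInsert (· < ·) p.2 s.row).1 := by
  unfold insert
  split <;> simp_all

theorem FirstRow.eq_or_mem_of_mem_recorded_insert {s : FirstRow β α} {p : β × α} {a : β}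
    (ha : a ∈ (s.insert p).recorded) : a = p.1 ∨ a ∈ s.recorded := by
  unfold insert at ha
  split at ha
  · simpa [or_comm] using ha
  · exact .inr ha

theorem FirstRow.mem_bumped_insert {s : FirstRow β α} {p e : β × α} :
    e ∈ (s.insert p).bumped ↔
      e ∈ s.bumped ∨ p.1 = e.1 ∧ (rowInsert (· < ·) p.2 s.row).2 = some e.2 := by
  unfold insert
  split <;> simp_all [Prod.ext_iff, eq_comm]

theorem firstRow_append_singleton (w : List (β × α)) (p : β × α) :
    firstRow (w ++ [p]) = (firstRow w).insert p := by
  simp [firstRow]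

variable {w : List (β × α)}

theorem pairwise_le_row_firstRow (w : List (β × α)) : (firstRow w).row.Pairwise (· ≤ ·) := by
  induction w using List.reverseRecOn with
  | nil => exact List.Pairwise.nil
  | append_singleton w p ih =>
    rw [firstRow_append_singleton, FirstRow.row_insert]
    exact pairwise_le_rowInsert ih

theorem mem_map_snd_of_mem_row {x : α} (hx : x ∈ (firstRow w).row) : x ∈ w.map Prod.snd := by
  induction w using List.reverseRecOn with
  | nil => simp [firstRow] at hx
  | append_singleton w p ih =>
    rw [firstRow_append_singleton, FirstRow.row_insert] at hx
    rw [List.map_append, List.mem_append]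
    obtain rfl | hx := eq_or_mem_of_mem_rowInsert hx
    exacts [.inr List.mem_cons_self, .inl (ih hx)]

theorem mem_map_fst_of_mem_recorded {a : β} (ha : a ∈ (firstRow w).recorded) :
    a ∈ w.map Prod.fst := by
  induction w using List.reverseRecOn with
  | nil => simp [firstRow] at ha
  | append_singleton w p ih =>
    rw [firstRow_append_singleton] at ha
    rw [List.map_append, List.mem_append]
    obtain rfl | ha := FirstRow.eq_or_mem_of_mem_recorded_insert ha
    exacts [.inr List.mem_cons_self, .inl (ih ha)]

theorem snd_mem_map_snd_of_mem_bumped {e : β × α} (he : e ∈ (firstRow w).bumped) :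
    e.2 ∈ w.map Prod.snd := by
  induction w using List.reverseRecOn with
  | nil => simp [firstRow] at he
  | append_singleton w p ih =>
    rw [firstRow_append_singleton, FirstRow.mem_bumped_insert] at he
    rw [List.map_append, List.mem_append]
    obtain he | ⟨-, he⟩ := he
    exacts [.inl (ih he), .inl (mem_map_snd_of_mem_row (mem_of_rowInsert_eq_some he))]

theorem exists_lt_of_mem_bumped {e : β × α} (he : e ∈ (firstRow w).bumped) :
    ∃ q ∈ w, q.1 = e.1 ∧ q.2 < e.2 := by
  induction w using List.reverseRecOn with
  | nil => simp [firstRow] at he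
  | append_singleton w p ih =>
    rw [firstRow_append_singleton, FirstRow.mem_bumped_insert] at he
    obtain he | ⟨hpe, he⟩ := he
    · obtain ⟨q, hq, hqe⟩ := ih he
      exact ⟨q, List.mem_append_left _ hq, hqe⟩
    · exact ⟨p, by simp, hpe, rel_of_rowInsert_eq_some he⟩

end FirstRow

theorem rowInsert_eq_findIdx? (v : ℕ) (S : List ℕ) :
    rowInsert (· < ·) v S =
      match S.findIdx? (fun x => decide (v < x)) with
      | none => (S ++ [v], none)
      | some i => (S.set i v, some (S.getD i 0)) := by
  induction S with
  | nil => rfl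
  | cons x S ih =>
    by_cases h : v < x
    · simp [rowInsert, h, List.findIdx?_cons]
    · simp only [rowInsert, h, if_false, List.findIdx?_cons, ih]
      cases S.findIdx? (fun x => decide (v < x)) <;> simp

theorem insRow_eq_tableauInsert (v : ℕ) (T : List (List ℕ)) :
    insRow v T = tableauInsert (· < ·) v T := by
  induction T generalizing v with
  | nil => rfl
  | cons S T ih =>
    rw [insRow, tableauInsert, rowInsert_eq_findIdx?]
    cases S.findIdx? (fun x => decide (v < x)) <;> simp [ih]

theorem Pword_eq_insertionTableau (w : List ℕ) : Pword w = insertionTableau (· < ·) w := by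
  simp only [Pword, insertionTableau, insRow_eq_tableauInsert]

theorem rsk_append_singleton (w : List (ℕ × ℕ)) (p : ℕ × ℕ) :
    rsk (w ++ [p]) =
      (insRow p.2 (rsk w).1,
        addBox (rsk w).2 (growIdx (rsk w).1 (insRow p.2 (rsk w).1)) p.1) := by
  simp [rsk]

theorem rsk_fst (w : List (ℕ × ℕ)) : (rsk w).1 = Pword (w.map Prod.snd) := by
  induction w using List.reverseRecOn with
  | nil => rfl
  | append_singleton w p ih => simp [rsk_append_singleton, ih, Pword]

theorem growIdx_cons (S S' : List ℕ) (P P' : List (List ℕ)) :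
    growIdx (S :: P) (S' :: P') = if S.length ≠ S'.length then 0 else growIdx P P' + 1 := by
  unfold growIdx
  rw [List.length_cons, List.range_succ_eq_map, List.findIdx_cons, List.findIdx_map]
  by_cases h : S.length = S'.length <;> simp [h, Function.comp_def]

theorem addBox_cons_zero (q : List ℕ) (Q : List (List ℕ)) (a : ℕ) :
    addBox (q :: Q) 0 a = (q ++ [a]) :: Q := by
  simp [addBox]

theorem addBox_cons_succ (q : List ℕ) (Q : List (List ℕ)) (i a : ℕ) :
    addBox (q :: Q) (i + 1) a = q :: addBox Q i a := by
  simp only [addBox, List.length_cons, Nat.add_lt_add_iff_right]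
  split <;> simp

theorem rsk_eq_cons {w : List (ℕ × ℕ)} (hw : w ≠ []) :
    rsk w =
      ((firstRow w).row :: (rsk (firstRow w).bumped).1,
        (firstRow w).recorded :: (rsk (firstRow w).bumped).2) := by
  induction w using List.reverseRecOn with
  | nil => exact absurd rfl hw
  | append_singleton w p ih =>
    obtain rfl | hw := eq_or_ne w []
    · rfl
    rw [rsk_append_singleton, ih hw, firstRow_append_singleton]
    simp only [insRow_eq_tableauInsert, tableauInsert, growIdx_cons]
    cases h : (rowInsert (· < ·) p.2 (firstRow w).row).2 with
    | none =>
      simp [FirstRow.insert_of_eq_none h, rowInsert_eq_of_eq_none h, addBox_cons_zero]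
    | some c =>
      simp [FirstRow.insert_of_eq_some h, length_rowInsert_of_eq_some h, addBox_cons_succ,
        rsk_append_singleton, insRow_eq_tableauInsert]

/-! ### Recording tableaux of Burge words -/

section Burge

variable {α β : Type*} [LinearOrder α] [LinearOrder β]

/-- The order of the letters (top, bottom) in a Burge word: tops increase, and bottoms strictly
decrease among letters with equal top. -/
def BurgeLT (p q : β × α) : Prop :=
  p.1 < q.1 ∨ p.1 = q.1 ∧ q.2 < p.2

/-- The weak order of letters (top, bottom) by their bottom, ties being broken by the top. -/
def BottomLE (p q : β × α) : Prop :=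
  p.2 < q.2 ∨ p.2 = q.2 ∧ p.1 ≤ q.1

theorem BurgeLT.fst_le {p q : β × α} (h : BurgeLT p q) : p.1 ≤ q.1 :=
  h.elim le_of_lt fun h => h.1.le

theorem BottomLE.snd_le {p q : β × α} (h : BottomLE p q) : p.2 ≤ q.2 :=
  h.elim le_of_lt fun h => h.1.le

theorem BottomLE.fst_lt {p q : β × α} (h : BottomLE p q) (hpq : BurgeLT p q) : p.1 < q.1 :=
  hpq.resolve_right fun hb => hb.2.not_ge h.snd_le

theorem BottomLE.snd_lt {p q : β × α} (h : BottomLE q p) (hpq : BurgeLT p q) : q.2 < p.2 :=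
  h.elim id fun hb => hpq.elim (fun ht => absurd hb.2 ht.not_ge) And.right

variable {p q : β × α} {u v w z : List (β × α)} {s s₁ : FirstRow β α}

theorem bumped_le_of_fst_eq {c : α} (hw : (w ++ [p]).Pairwise BurgeLT)
    (hc : (rowInsert (· < ·) p.2 (firstRow w).row).2 = some c)
    (hq : q ∈ w) (hqp : q.1 = p.1) : c ≤ q.2 := by
  obtain ⟨w, l, rfl⟩ := (List.eq_nil_or_concat' w).resolve_left (List.ne_nil_of_mem hq)
  obtain ⟨hwl, -, hp⟩ := List.pairwise_append.1 hw
  have hlp : BurgeLT l p := hp l (by simp) p (by simp)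
  have hql : q = l ∨ BurgeLT q l :=
    (List.mem_append.1 hq).symm.imp List.mem_singleton.1
      fun h => (List.pairwise_append.1 hwl).2.2 q h l (by simp)
  have hlq : l.2 ≤ q.2 ∧ p.2 < l.2 := by
    obtain rfl | hql := hql
    · exact ⟨le_rfl, (hlp.resolve_left hqp.not_lt).2⟩
    · have hl : q.1 = l.1 := hql.fst_le.antisymm (hqp ▸ hlp.fst_le)
      exact ⟨(hql.resolve_left hl.not_lt).2.le, (hlp.resolve_left (hl ▸ hqp).not_lt).2⟩
  have hmem : l.2 ∈ (firstRow (w ++ [l])).row := by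
    rw [firstRow_append_singleton, FirstRow.row_insert]
    exact mem_rowInsert_self _ _ _
  obtain ⟨c', hc'l, hc'⟩ := exists_le_rowInsert_eq_some (pairwise_le_row_firstRow _) hmem hlq.2
  rw [Option.some_injective _ (hc.symm.trans hc')]
  exact hc'l.trans hlq.1

theorem pairwise_burgeLT_bumped (hw : w.Pairwise BurgeLT) :
    (firstRow w).bumped.Pairwise BurgeLT := by
  induction w using List.reverseRecOn with
  | nil => exact List.Pairwise.nil
  | append_singleton w p ih =>
    obtain ⟨hw', -, hwp⟩ := List.pairwise_append.1 hw
    rw [firstRow_append_singleton]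
    cases hc : (rowInsert (· < ·) p.2 (firstRow w).row).2 with
    | none => simpa only [FirstRow.insert_of_eq_none hc] using ih hw'
    | some c =>
      rw [FirstRow.insert_of_eq_some hc]
      refine List.pairwise_append.2 ⟨ih hw', List.pairwise_singleton _ _, fun e he f hf => ?_⟩
      obtain rfl := List.mem_singleton.1 hf
      obtain ⟨q, hq, hqe, hqe'⟩ := exists_lt_of_mem_bumped he
      rw [BurgeLT, ← hqe]
      exact (hwp q hq p (by simp)).fst_le.lt_or_eq.imp_right fun hqp =>
        ⟨hqp, (bumped_le_of_fst_eq hw hc hq hqp).trans_lt hqe'⟩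

/-- `s` and `s₁` are the first rows of two biwords, the second of which has the extra letter `p`,
whose bottom is maximal. Either that bottom is still at the end of the row, or it has been bumped
and carries the top `a`. In both cases `s₁.recorded` arises from `s.recorded` by dual insertion of
`p.1`. -/
inductive InsertedLetter (p : β × α) (s s₁ : FirstRow β α) : Prop
  | appended (row : s₁.row = s.row ++ [p.2])
      (recorded : rowInsert (· ≤ ·) p.1 s.recorded = (s₁.recorded, none))
      (bumped : s₁.bumped = s.bumped)
  | bumped (a : β) (row : s₁.row = s.row) (row_lt : ∀ x ∈ s.row, x < p.2)
      (recorded : rowInsert (· ≤ ·) p.1 s.recorded = (s₁.recorded, some a))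
      (bumped : s₁.bumped.Perm (s.bumped ++ [(a, p.2)]))
      (bumped_le : ∀ e ∈ s.bumped, BottomLE e (a, p.2))

theorem InsertedLetter.insert_of_eq_some {c : α} (h : InsertedLetter p s s₁) (hqp : q.2 < p.2)
    (hc : (rowInsert (· < ·) q.2 s.row).2 = some c) :
    InsertedLetter p (s.insert q) (s₁.insert q) := by
  obtain ⟨row, recorded, bumped⟩ | ⟨a, row, row_lt, recorded, bumped, bumped_le⟩ := h
  · have hrow : rowInsert (· < ·) q.2 s₁.row =
        ((rowInsert (· < ·) q.2 s.row).1 ++ [p.2], some c) :=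
      row ▸ rowInsert_append_of_eq_some [p.2] hc
    rw [FirstRow.insert_of_eq_some hc, FirstRow.insert_of_eq_some (congrArg Prod.snd hrow)]
    exact .appended (congrArg Prod.fst hrow) recorded (congrArg (· ++ _) bumped)
  · rw [FirstRow.insert_of_eq_some hc, FirstRow.insert_of_eq_some (row ▸ hc)]
    refine .bumped a (by rw [row]) (fun x hx => ?_) recorded ?_ fun e he => ?_
    · obtain rfl | hx := eq_or_mem_of_mem_rowInsert hx
      exacts [hqp, row_lt x hx]
    · refine (bumped.append_right _).trans ?_
      simpa only [List.append_assoc] using List.perm_append_comm.append_left s.bumped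
    · obtain he | he := List.mem_append.1 he
      · exact bumped_le e he
      · rw [List.mem_singleton.1 he]
        exact .inl (row_lt c (mem_of_rowInsert_eq_some hc))

theorem InsertedLetter.insert_of_eq_none (h : InsertedLetter p s s₁) (hpq : p.1 ≤ q.1)
    (hqp : q.2 < p.2) (hs : ∀ e ∈ s.bumped, e.1 ≤ q.1 ∧ e.2 ≤ p.2)
    (hc : (rowInsert (· < ·) q.2 s.row).2 = none) :
    InsertedLetter p (s.insert q) (s₁.insert q) := by
  have hrow_lt (hlt : ∀ x ∈ s.row, x < p.2) : ∀ x ∈ s.row ++ [q.2], x < p.2 := fun x hx =>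
    (List.mem_append.1 hx).elim (hlt x) fun hx => List.mem_singleton.1 hx ▸ hqp
  rw [FirstRow.insert_of_eq_none hc]
  obtain ⟨row, recorded, bumped⟩ | ⟨a, row, row_lt, recorded, bumped, bumped_le⟩ := h
  · have hrow : rowInsert (· < ·) q.2 s₁.row = (s.row ++ [q.2], some p.2) := by
      rw [row, rowInsert_append_of_eq_none _ hc]
      simp [rowInsert, hqp]
    have hnone : (rowInsert (· ≤ ·) p.1 s.recorded).2 = none := by rw [recorded]
    have hrecorded : rowInsert (· ≤ ·) p.1 (s.recorded ++ [q.1]) =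
        (s₁.recorded, some q.1) := by
      have hs₁ : s.recorded ++ [p.1] = s₁.recorded :=
        congrArg Prod.fst ((rowInsert_eq_of_eq_none hnone).symm.trans recorded)
      rw [rowInsert_append_of_eq_none _ hnone, ← hs₁]
      simp [rowInsert, hpq]
    rw [FirstRow.insert_of_eq_some (congrArg Prod.snd hrow)]
    refine .bumped q.1 (congrArg Prod.fst hrow) (hrow_lt fun x hx => ?_) hrecorded
      (by rw [bumped]) fun e he => ?_
    · exact (not_lt.1 (rowInsert_snd_eq_none_iff.1 hc x hx)).trans_lt hqp
    · exact (hs e he).2.lt_or_eq.imp_right fun h => ⟨h, (hs e he).1⟩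
  · have hrecorded := rowInsert_append_of_eq_some [q.1] (congrArg Prod.snd recorded)
    rw [congrArg Prod.fst recorded] at hrecorded
    rw [FirstRow.insert_of_eq_none (row ▸ hc)]
    exact .bumped a (by rw [row]) (hrow_lt row_lt) hrecorded bumped bumped_le

theorem InsertedLetter.insert (h : InsertedLetter p s s₁) (hpq : p.1 ≤ q.1) (hqp : q.2 < p.2)
    (hs : ∀ e ∈ s.bumped, e.1 ≤ q.1 ∧ e.2 ≤ p.2) :
    InsertedLetter p (s.insert q) (s₁.insert q) :=
  match hc : (rowInsert (· < ·) q.2 s.row).2 with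
  | none => h.insert_of_eq_none hpq hqp hs hc
  | some _ => h.insert_of_eq_some hqp hc

theorem insertedLetter_firstRow (h : (u ++ p :: v).Pairwise BurgeLT)
    (hp : ∀ q ∈ u ++ v, BottomLE q p) :
    InsertedLetter p (firstRow (u ++ v)) (firstRow (u ++ p :: v)) := by
  have hBurge : ∀ q ∈ u, BurgeLT q p := fun q hq =>
    (List.pairwise_append.1 h).2.2 q hq p List.mem_cons_self
  induction v using List.reverseRecOn with
  | nil =>
    rw [List.append_nil] at hp ⊢
    rw [firstRow_append_singleton]
    have hrow : ∀ x ∈ (firstRow u).row, ¬ p.2 < x := fun x hx => by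
      obtain ⟨q, hq, rfl⟩ := List.mem_map.1 (mem_map_snd_of_mem_row hx)
      exact (hp q hq).snd_le.not_gt
    have hrecorded : ∀ a ∈ (firstRow u).recorded, ¬ p.1 ≤ a := fun a ha => by
      obtain ⟨q, hq, rfl⟩ := List.mem_map.1 (mem_map_fst_of_mem_recorded ha)
      exact ((hp q hq).fst_lt (hBurge q hq)).not_ge
    rw [FirstRow.insert_of_eq_none (rowInsert_snd_eq_none_iff.2 hrow)]
    exact .appended rfl (rowInsert_of_forall_not hrecorded) rfl
  | append_singleton v q ih =>
    have hassoc : u ++ p :: (v ++ [q]) = (u ++ p :: v) ++ [q] := by simp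
    rw [hassoc] at h ⊢
    rw [← List.append_assoc] at hp ⊢
    obtain ⟨h, -, hq⟩ := List.pairwise_append.1 h
    replace hq : ∀ l ∈ u ++ p :: v, BurgeLT l q := fun l hl => hq l hl q (by simp)
    have hpq : BurgeLT p q := hq p (by simp)
    have hp' : ∀ l ∈ u ++ v, BottomLE l p := fun l hl => hp l (List.mem_append_left _ hl)
    rw [firstRow_append_singleton, firstRow_append_singleton]
    refine (ih h hp').insert hpq.fst_le ((hp q (by simp)).snd_lt hpq) fun e he => ⟨?_, ?_⟩
    · obtain ⟨l, hl, hle, -⟩ := exists_lt_of_mem_bumped he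
      exact hle ▸ (hq l (by grind)).fst_le
    · obtain ⟨l, hl, hle⟩ := List.mem_map.1 (snd_mem_map_snd_of_mem_bumped he)
      exact hle ▸ (hp' l hl).snd_le

theorem exists_rowInsertWord_map_fst_eq (hw : w.Pairwise BurgeLT) (hzw : z.Perm w)
    (hz : z.Pairwise BottomLE) :
    ∃ y : List (β × α), y.Perm (firstRow w).bumped ∧ y.Pairwise BottomLE ∧
      rowInsertWord (· ≤ ·) [] (z.map Prod.fst) =
        ((firstRow w).recorded, y.map Prod.fst) := by
  induction z using List.reverseRecOn generalizing w with
  | nil =>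
    obtain rfl := List.nil_perm.1 hzw
    exact ⟨[], .refl _, .nil, rfl⟩
  | append_singleton z p ih =>
    have hpw : p ∈ w := hzw.subset (List.mem_append_right z List.mem_cons_self)
    obtain ⟨u, v, rfl⟩ := List.append_of_mem hpw
    have hzuv : z.Perm (u ++ v) :=
      ((List.perm_append_singleton p z).symm.trans (hzw.trans List.perm_middle)).cons_inv
    obtain ⟨hz, -, hzp⟩ := List.pairwise_append.1 hz
    have hp : ∀ q ∈ u ++ v, BottomLE q p := fun q hq =>
      hzp q (hzuv.symm.subset hq) p (by simp)
    obtain ⟨y, hy, hysorted, hyrow⟩ :=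
      ih (hw.sublist ((List.sublist_cons_self p v).append_left u)) hzuv hz
    rw [List.map_append, rowInsertWord_append, hyrow]
    obtain ⟨-, recorded, bumped⟩ | ⟨a, -, -, recorded, bumped, bumped_le⟩ :=
      insertedLetter_firstRow hw hp
    · exact ⟨y, bumped ▸ hy, hysorted, by simp [rowInsertWord, recorded]⟩
    · refine ⟨y ++ [(a, p.2)], (hy.append_right _).trans bumped.symm, ?_, ?_⟩
      · refine List.pairwise_append.2 ⟨hysorted, List.pairwise_singleton _ _, fun e he f hf => ?_⟩
        rw [List.mem_singleton.1 hf]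
        exact bumped_le e (hy.subset he)
      · simp [rowInsertWord, recorded]

end Burge

theorem rsk_snd_eq_insertionTableau {w z : List (ℕ × ℕ)} (hw : w.Pairwise BurgeLT)
    (hzw : z.Perm w) (hz : z.Pairwise BottomLE) :
    (rsk w).2 = insertionTableau (· ≤ ·) (z.map Prod.fst) := by
  obtain rfl | hz₀ := eq_or_ne z []
  · rw [List.nil_perm.1 hzw]
    rfl
  have hw₀ : w ≠ [] := fun h => hz₀ (List.perm_nil.1 (h ▸ hzw))
  have hmap : z.map Prod.fst ≠ [] := by simpa using hz₀
  obtain ⟨y, hy, hysorted, hyrow⟩ := exists_rowInsertWord_map_fst_eq hw hzw hz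
  have : y.length < z.length := by
    simpa [hyrow] using length_rowInsertWord_nil_snd_lt (r := (· ≤ ·)) hmap
  rw [rsk_eq_cons hw₀, insertionTableau_eq_cons hmap, hyrow,
    rsk_snd_eq_insertionTableau (pairwise_burgeLT_bumped hw) hy hysorted]
termination_by z.length

/-! ### The words of a bitableau -/

section Words

variable {α : Type*}

theorem flatMap_range_filter_perm (f : α → ℕ) {n : ℕ} {L : List α}
    (hf : ∀ x ∈ L, 1 ≤ f x ∧ f x ≤ n) :
    ((List.range n).flatMap fun k => L.filter fun x => decide (f x = k + 1)).Perm L := by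
  induction n generalizing L with
  | zero => cases L with
    | nil => rfl
    | cons x L =>
      have hx := hf x List.mem_cons_self
      lia
  | succ n ih =>
    have hrest : ∀ k ∈ List.range n, L.filter (fun x => decide (f x = k + 1)) =
        (L.filter fun x => !decide (f x = n + 1)).filter fun x => decide (f x = k + 1) := by
      intro k hk
      rw [List.filter_filter]
      refine List.filter_congr fun x _ => ?_
      grind
    rw [List.range_succ, List.flatMap_append, List.flatMap_singleton, List.flatMap_congr hrest]
    exact ((ih (by grind)).append_right _).trans
      (List.perm_append_comm.trans (List.filter_append_perm _ L))

variable {L : List (ℕ × ℕ)}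

/-- The entries of a bitableau sorted by their second coordinate `1, …, m`, entries with equal
second coordinate in the order of `L`. -/
def sortByBottom (m : ℕ) (L : List (ℕ × ℕ)) : List (ℕ × ℕ) :=
  (List.range m).flatMap fun k => L.filter fun p => decide (p.2 = k + 1)

theorem wCol_eq_map_burge (n : ℕ) (L : List (ℕ × ℕ)) : wCol n L = (burge n L).map Prod.snd := by
  simp only [wCol, burge, List.map_flatMap]

theorem uCol'_eq_reverse (m : ℕ) (L : List (ℕ × ℕ)) :
    uCol' m L = ((sortByBottom m L).map Prod.fst).reverse := by
  simp [uCol', sortByBottom, List.map_flatMap, List.reverse_flatMap, Function.comp_def]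

theorem IsColBitab.pairwise {n m r : ℕ} (hL : IsColBitab n m r L) : L.Pairwise lexLt :=
  haveI : IsTrans (ℕ × ℕ) lexLt := ⟨fun p q s hpq hqs => by unfold lexLt at *; lia⟩
  List.isChain_iff_pairwise.1 hL.2.2

theorem pairwise_burgeLT_burge (n : ℕ) (hL : L.Pairwise lexLt) :
    (burge n L).Pairwise BurgeLT := by
  refine List.pairwise_flatMap.2 ⟨fun k _ => ?_, ?_⟩
  · refine List.pairwise_reverse.2 ((hL.filter _).imp_of_mem fun {p q} hp hq hpq => ?_)
    have hpk := List.mem_filter.1 hp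
    have hqk := List.mem_filter.1 hq
    simp only [lexLt, BurgeLT, decide_eq_true_eq] at *
    lia
  · refine List.pairwise_lt_range.imp fun {k l} hkl p hp q hq => .inl ?_
    simp only [List.mem_reverse, List.mem_filter, decide_eq_true_eq] at hp hq
    lia

theorem pairwise_bottomLE_sortByBottom (m : ℕ) (hL : L.Pairwise lexLt) :
    (sortByBottom m L).Pairwise BottomLE := by
  refine List.pairwise_flatMap.2 ⟨fun k _ => ?_, ?_⟩
  · refine (hL.filter _).imp_of_mem fun {p q} hp hq hpq => ?_
    have hpk := List.mem_filter.1 hp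
    have hqk := List.mem_filter.1 hq
    simp only [lexLt, BottomLE, decide_eq_true_eq] at *
    lia
  · refine List.pairwise_lt_range.imp fun {k l} hkl p hp q hq => .inl ?_
    simp only [List.mem_filter, decide_eq_true_eq] at hp hq
    lia

theorem IsColBitab.sortByBottom_perm_burge {n m r : ℕ} (hL : IsColBitab n m r L) :
    (sortByBottom m L).Perm (burge n L) :=
  (flatMap_range_filter_perm Prod.snd fun p hp => (hL.2.1 p hp).2).trans
    ((List.Perm.flatMap_left _ fun _ _ => List.reverse_perm _).trans
      (flatMap_range_filter_perm Prod.fst fun p hp => (hL.2.1 p hp).1)).symm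

end Words

theorem insertionTableau_reverse_eq_transposeT (y : List ℕ) :
    insertionTableau (· < ·) y.reverse = transposeT (insertionTableau (· ≤ ·) y) := by
  rw [(knuthEquiv_reverse_columnReading y).insertionTableau_eq,
    (isColumnTableau_insertionTableau y).insertionTableau_columnReading]

/-- For a single-column lexicographic bitableau `T ∈ B_{(1^r)}(n,m)`,
`bRSK(T) = (P(w(T)), P(u'(T)))`. -/
theorem stmt_10 (n m r : ℕ) (hn : 1 ≤ n) (hm : 1 ≤ m)
    (L : List (ℕ × ℕ)) (hL : IsColBitab n m r L) :
    bRSK n L = (Pword (wCol n L), Pword (uCol' m L)) := by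
  have hrecording : (rsk (burge n L)).2 =
      insertionTableau (· ≤ ·) ((sortByBottom m L).map Prod.fst) :=
    rsk_snd_eq_insertionTableau (pairwise_burgeLT_burge n hL.pairwise)
      hL.sortByBottom_perm_burge (pairwise_bottomLE_sortByBottom m hL.pairwise)
  rw [bRSK, rsk_fst, ← wCol_eq_map_burge, hrecording, ← insertionTableau_reverse_eq_transposeT,
    ← uCol'_eq_reverse, ← Pword_eq_insertionTableau]
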